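/- (Poisson–Mehler formula) For all real q, ρ with |q| < 1 and |ρ| < 1, and all x, y ∈ S(q), the series Σ_{n=0}^∞ (ρⁿ/[n]_q!)·H_n(x|q)·H_n(y|q) converges and equals (ρ²;q)_∞ / ∏_{k=0}^∞ W_k(x,y,ρ|q). -/

import Mathlib

noncomputable section

open Finset

/-- The q-integer `[n]_q = 1 + q + ⋯ + q^{n-1}`. -/
def qInt (q : ℝ) (n : ℕ) : ℝ := ∑ i ∈ Finset.range n, q ^ i

/-- The q-factorial `[n]_q!`. -/
def qFact (q : ℝ) (n : ℕ) : ℝ := ∏ j ∈ Finset.range n, qInt q (j + 1)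

/-- The q-binomial coefficient. -/
def qBinom (q : ℝ) (n k : ℕ) : ℝ :=
  if k ≤ n then qFact q n / (qFact q (n - k) * qFact q k) else 0

/-- The finite q-Pochhammer symbol `(a;q)_n`. -/
def qPoch (a q : ℝ) (n : ℕ) : ℝ := ∏ j ∈ Finset.range n, (1 - a * q ^ j)

/-- The infinite q-Pochhammer symbol `(a;q)_∞`. -/
def qPochInf (a q : ℝ) : ℝ := ∏' j : ℕ, (1 - a * q ^ j)

/-- The q-Hermite polynomials `H_n(x|q)`. -/
def qHermite (q : ℝ) : ℕ → ℝ → ℝ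
  | 0, _ => 1
  | 1, x => x
  | n + 2, x => x * qHermite q (n + 1) x - qInt q (n + 1) * qHermite q n x

/-- The rescaled q-ultraspherical polynomials `R_n(x|β,q)`. -/
def qUltra (q β : ℝ) : ℕ → ℝ → ℝ
  | 0, _ => 1
  | 1, x => (1 - β) * x
  | n + 2, x => (1 - β * q ^ (n + 1)) * x * qUltra q β (n + 1) x
      - (1 - β ^ 2 * q ^ n) * qInt q (n + 1) * qUltra q β n x

/-- The Al-Salam–Chihara polynomials `P_n(x|y,ρ,q)`. -/
def ASC (q y ρ : ℝ) : ℕ → ℝ → ℝ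
  | 0, _ => 1
  | 1, x => x - ρ * y
  | n + 2, x => (x - ρ * y * q ^ (n + 1)) * ASC q y ρ (n + 1) x
      - (1 - ρ ^ 2 * q ^ n) * qInt q (n + 1) * ASC q y ρ n x

/-- The polynomials `B_n(y|q)` (q⁻¹-Hermite related). -/
def qB (q : ℝ) : ℕ → ℝ → ℝ
  | 0, _ => 1
  | 1, y => -y
  | n + 2, y => -q ^ (n + 1) * y * qB q (n + 1) y + q ^ n * qInt q (n + 1) * qB q n y

/-- The big q-Hermite polynomials `H_n(x|a,q)`. -/
def bigqHermite (q a : ℝ) : ℕ → ℝ → ℝ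
  | 0, _ => 1
  | 1, x => x - a
  | n + 2, x => (x - a * q ^ (n + 1)) * bigqHermite q a (n + 1) x
      - qInt q (n + 1) * bigqHermite q a n x

/-- The probabilistic Hermite polynomials `H_n(x)`. -/
def probHermite : ℕ → ℝ → ℝ
  | 0, _ => 1
  | 1, x => x
  | n + 2, x => x * probHermite (n + 1) x - (n + 1) * probHermite n x

/-- The probabilistic Hermite polynomials on ℂ. -/
def probHermiteC : ℕ → ℂ → ℂ
  | 0, _ => 1
  | 1, x => x
  | n + 2, x => x * probHermiteC (n + 1) x - (n + 1) * probHermiteC n x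

/-- The Chebyshev polynomials of the second kind. -/
def chebU : ℕ → ℝ → ℝ
  | 0, _ => 1
  | 1, x => 2 * x
  | n + 2, x => 2 * x * chebU (n + 1) x - chebU n x

/-- The Chebyshev polynomials of the first kind. -/
def chebT : ℕ → ℝ → ℝ
  | 0, _ => 1
  | 1, x => x
  | n + 2, x => 2 * x * chebT (n + 1) x - chebT n x

/-- `W_k(x,y,t|q)`. -/
def Wk (q x y t : ℝ) (k : ℕ) : ℝ :=
  (1 - t ^ 2 * q ^ (2 * k)) ^ 2 - (1 - q) * x * y * t * q ^ k * (1 + t ^ 2 * q ^ (2 * k))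
    + (1 - q) * t ^ 2 * q ^ (2 * k) * (x ^ 2 + y ^ 2)

/-- `V_k(x,a|q)`. -/
def Vk (q x a : ℝ) (k : ℕ) : ℝ :=
  1 - (1 - q) * a * x * q ^ k + (1 - q) * a ^ 2 * q ^ (2 * k)

/-- `L_k(x,a|q)`. -/
def Lk (q x a : ℝ) (k : ℕ) : ℝ :=
  (1 + a * q ^ k) ^ 2 - (1 - q) * x ^ 2 * a ^ 2 * q ^ k

/-- The support interval `S(q) = [-2/√(1-q), 2/√(1-q)]` for `|q| < 1`. -/
def Sq (q : ℝ) : Set ℝ := Set.Icc (-(2 / Real.sqrt (1 - q))) (2 / Real.sqrt (1 - q))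

/-!
With `γ_{k,l}(t) = ∑ₙ H_{n+k}(x) H_{n+l}(y) tⁿ / [n]_q!`, the three-term recurrence of the q-Hermite
polynomials gives linear relations between `γ₀₀, γ₁₀, γ₀₁, γ₁₁, γ₀₂` and the q-difference
`γ₀₀(t) - γ₀₀(tq)`. Eliminating everything but `γ₀₀` leaves
`W₀(t) γ₀₀(t) = (1 - t²) (1 - t² q) γ₀₀(tq)`, and iterating this towards `γ₀₀(0) = 1` produces the
infinite product. Convergence for `|t| < 1` comes from the generating function of the q-Hermite
polynomials, a product of two q-exponential series: for `x = 2 cos θ / √(1 - q)` it bounds the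
growth of `H_n(x)` by that of `(1 - q)^{-n/2}`.
-/

open Filter Topology
open scoped ComplexConjugate

/-! ### Power series with a given radius of convergence -/

/-- The power series with coefficients `f` has radius of convergence at least `R`, for `R ≥ 0`.
The radii `r < R` are written `s * R` with `0 < s < 1`, so that radii multiply in Hadamard
products. -/
def RadiusGE {E : Type*} [Norm E] (f : ℕ → E) (R : ℝ) : Prop :=
  ∀ s ∈ Set.Ioo (0 : ℝ) 1, Summable fun n => ‖f n‖ * (s * R) ^ n

namespace RadiusGE

lemma of_tendsto_ratio {E : Type*} [NormedAddCommGroup E] {f : ℕ → E} {R : ℝ} (hR : 0 < R)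
    (hf : ∀ n, f n ≠ 0) (h : Tendsto (fun n => ‖f (n + 1)‖ / ‖f n‖) atTop (𝓝 R⁻¹)) :
    RadiusGE f R := by
  rintro s ⟨hs0, hs1⟩
  have hsR : 0 < s * R := mul_pos hs0 hR
  refine summable_of_ratio_test_tendsto_lt_one hs1
    (.of_forall fun n => mul_ne_zero (norm_ne_zero_iff.2 (hf n)) (pow_pos hsR n).ne') ?_
  have hlim := h.mul_const (s * R)
  rw [show R⁻¹ * (s * R) = s by field_simp] at hlim
  refine hlim.congr fun n => ?_
  have := norm_ne_zero_iff.2 (hf n)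
  rw [norm_mul, norm_mul, norm_norm, norm_norm, Real.norm_of_nonneg (pow_pos hsR _).le,
    Real.norm_of_nonneg (pow_pos hsR _).le, pow_succ]
  field_simp

lemma ofReal_iff {f : ℕ → ℝ} {R : ℝ} : RadiusGE (fun n => (f n : ℂ)) R ↔ RadiusGE f R := by
  simp only [RadiusGE, Complex.norm_real]

lemma nat_add {E : Type*} [Norm E] {f : ℕ → E} {R : ℝ} (hR : R ≠ 0) (hf : RadiusGE f R) (k : ℕ) :
    RadiusGE (fun n => f (n + k)) R := by
  intro s hs
  refine (((summable_nat_add_iff k).2 (hf s hs)).mul_right ((s * R) ^ k)⁻¹).congr fun n => ?_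
  have hsR : (s * R) ^ k ≠ 0 := pow_ne_zero k (mul_ne_zero hs.1.ne' hR)
  rw [pow_add, ← mul_assoc, mul_inv_cancel_right₀ hsR]

lemma mul {E : Type*} [NonUnitalSeminormedRing E] {f g : ℕ → E} {R R' : ℝ}
    (hf : RadiusGE f R) (hg : RadiusGE g R') : RadiusGE (fun n => f n * g n) (R * R') := by
  rintro s ⟨hs0, hs1⟩
  have hs : √s ∈ Set.Ioo (0 : ℝ) 1 := ⟨Real.sqrt_pos.2 hs0, by
    rwa [Real.sqrt_lt' one_pos, one_pow]⟩
  have hdiag := ((hf _ hs).norm.mul_norm (hg _ hs).norm).comp_injective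
    (i := fun n : ℕ => (n, n)) fun _ _ h => (Prod.ext_iff.1 h).1
  refine .of_norm_bounded hdiag fun n => ?_
  have hsplit : (s * (R * R')) ^ n = (√s * R) ^ n * (√s * R') ^ n := by
    rw [← mul_pow, mul_mul_mul_comm, Real.mul_self_sqrt hs0.le]
  simp only [Function.comp_apply, hsplit, norm_mul, norm_norm]
  calc ‖f n * g n‖ * (‖(√s * R) ^ n‖ * ‖(√s * R') ^ n‖)
      ≤ ‖f n‖ * ‖g n‖ * (‖(√s * R) ^ n‖ * ‖(√s * R') ^ n‖) := by gcongr; exact norm_mul_le _ _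
    _ = _ := by ring

lemma coeff_mul {E : Type*} [SeminormedRing E] {F G : PowerSeries E} {R : ℝ}
    (hF : RadiusGE (fun n => PowerSeries.coeff n F) R)
    (hG : RadiusGE (fun n => PowerSeries.coeff n G) R) :
    RadiusGE (fun n => PowerSeries.coeff n (F * G)) R := by
  intro s hs
  refine .of_norm_bounded
    (summable_norm_sum_mul_antidiagonal_of_summable_norm (hF s hs).norm.norm (hG s hs).norm.norm)
    fun n => ?_
  simp only [PowerSeries.coeff_mul, norm_mul, norm_norm]
  refine (mul_le_mul_of_nonneg_right (norm_sum_le _ _) (norm_nonneg _)).trans ?_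
  rw [Real.norm_of_nonneg (sum_nonneg fun _ _ => by positivity), sum_mul]
  refine sum_le_sum fun p hp => ?_
  rw [← mem_antidiagonal.1 hp, pow_add, norm_mul ((s * R) ^ p.1), mul_mul_mul_comm]
  gcongr
  exact norm_mul_le _ _

lemma summable_norm_mul_pow {E : Type*} [SeminormedAddGroup E] {f : ℕ → E} {R r : ℝ}
    (hf : RadiusGE f R) (hr0 : 0 ≤ r) (hr : r < R) : Summable fun n => ‖f n‖ * r ^ n := by
  have hR : 0 < R := hr0.trans_lt hr
  obtain ⟨s, hrs, hs1⟩ := exists_between ((div_lt_one hR).2 hr)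
  have hs0 : 0 < s := (div_nonneg hr0 hR.le).trans_lt hrs
  refine (hf s ⟨hs0, hs1⟩).of_nonneg_of_le (fun n => by positivity) fun n => ?_
  gcongr
  exact ((div_lt_iff₀ hR).1 hrs).le

lemma tendsto_tsum_nhds_zero {𝕜 : Type*} [NormedField 𝕜] [CompleteSpace 𝕜] {f : ℕ → 𝕜} {R : ℝ}
    (hR : 0 < R) (hf : RadiusGE f R) :
    Tendsto (fun z => ∑' n, f n * z ^ n) (𝓝 0) (𝓝 (f 0)) := by
  have h0 : f 0 = ∑' n, f n * 0 ^ n := by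
    rw [tsum_eq_single 0 fun n hn => by simp [hn], pow_zero, mul_one]
  rw [h0]
  refine tendsto_tsum_of_dominated_convergence
    (hf.summable_norm_mul_pow (half_pos hR).le (half_lt_self hR))
    (fun n => ((continuous_pow n).tendsto 0).const_mul _) ?_
  filter_upwards [Metric.closedBall_mem_nhds (0 : 𝕜) (half_pos hR)] with z hz n
  rw [norm_mul, norm_pow]
  gcongr
  exact mem_closedBall_zero_iff.1 hz

end RadiusGE

/-! ### q-integers and q-factorials -/

section QFactorial

variable {q : ℝ}

lemma qInt_mul_one_sub (q : ℝ) (n : ℕ) : qInt q n * (1 - q) = 1 - q ^ n :=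
  geom_sum_mul_neg q n

lemma one_sub_pos_of_abs_lt_one (hq : |q| < 1) : 0 < 1 - q :=
  sub_pos.2 (lt_of_abs_lt hq)

lemma qInt_succ_pos (hq : |q| < 1) (n : ℕ) : 0 < qInt q (n + 1) := by
  have hpow : |q ^ (n + 1)| < 1 := by
    rw [abs_pow]
    exact pow_lt_one₀ (abs_nonneg q) hq n.succ_ne_zero
  refine pos_of_mul_pos_left ?_ (one_sub_pos_of_abs_lt_one hq).le
  rw [qInt_mul_one_sub]
  exact one_sub_pos_of_abs_lt_one hpow

lemma tendsto_qInt (hq : |q| < 1) : Tendsto (qInt q) atTop (𝓝 (1 - q)⁻¹) :=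
  (hasSum_geometric_of_abs_lt_one hq).tendsto_sum_nat

lemma qFact_succ (q : ℝ) (n : ℕ) : qFact q (n + 1) = qFact q n * qInt q (n + 1) :=
  prod_range_succ _ n

lemma qFact_pos (hq : |q| < 1) (n : ℕ) : 0 < qFact q n :=
  prod_pos fun j _ => qInt_succ_pos hq j

lemma tendsto_qFact_ratio (hq : |q| < 1) :
    Tendsto (fun n => ‖qFact q (n + 1)‖ / ‖qFact q n‖) atTop (𝓝 (1 - q)⁻¹) := by
  refine ((tendsto_qInt hq).comp (tendsto_add_atTop_nat 1)).congr fun n => ?_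
  rw [Real.norm_of_nonneg (qFact_pos hq _).le, Real.norm_of_nonneg (qFact_pos hq _).le, qFact_succ,
    mul_div_cancel_left₀ _ (qFact_pos hq n).ne', Function.comp_apply]

lemma radiusGE_qFact (hq : |q| < 1) : RadiusGE (qFact q) (1 - q) :=
  .of_tendsto_ratio (one_sub_pos_of_abs_lt_one hq) (fun n => (qFact_pos hq n).ne')
    (tendsto_qFact_ratio hq)

lemma radiusGE_inv_qFact (hq : |q| < 1) : RadiusGE (fun n => (qFact q n)⁻¹) (1 - q)⁻¹ := by
  have hq1 := one_sub_pos_of_abs_lt_one hq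
  refine .of_tendsto_ratio (inv_pos.2 hq1) (fun n => inv_ne_zero (qFact_pos hq n).ne') ?_
  refine ((tendsto_qFact_ratio hq).inv₀ (inv_ne_zero hq1.ne')).congr fun n => ?_
  rw [norm_inv, norm_inv, inv_div_inv, inv_div]

end QFactorial

/-! ### The generating function of the q-Hermite polynomials -/

section GeneratingFunction

variable {q : ℝ}

/-- The q-exponential series `∑ₙ uⁿ Xⁿ / [n]_q!`. -/
def qExpSeries (q : ℝ) (u : ℂ) : PowerSeries ℂ :=
  .mk fun n => u ^ n * ((qFact q n)⁻¹ : ℝ)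

lemma rescale_qExpSeries (hq : |q| < 1) (u : ℂ) :
    PowerSeries.rescale (q : ℂ) (qExpSeries q u) =
      (1 - PowerSeries.C ((1 - q) * u) * PowerSeries.X) * qExpSeries q u := by
  ext n
  rw [sub_mul, one_mul, mul_assoc, map_sub, PowerSeries.coeff_C_mul, PowerSeries.coeff_rescale]
  cases n with
  | zero => simp
  | succ n =>
    have hI : (qInt q (n + 1) : ℂ) ≠ 0 := mod_cast (qInt_succ_pos hq n).ne'
    have hF : (qFact q n : ℂ) ≠ 0 := mod_cast (qFact_pos hq n).ne'
    have hpow : (q : ℂ) ^ (n + 1) = 1 - qInt q (n + 1) * (1 - q) := by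
      exact_mod_cast (sub_eq_iff_eq_add.2 (by linarith [qInt_mul_one_sub q (n + 1)])).symm
    rw [PowerSeries.coeff_succ_X_mul, qExpSeries, PowerSeries.coeff_mk, PowerSeries.coeff_mk,
      qFact_succ, hpow]
    push_cast
    field_simp
    ring

lemma rescale_qExpSeries_mul_qExpSeries (hq : |q| < 1) {x u v : ℂ} (hadd : u + v = x)
    (hmul : (1 - q) * (u * v) = 1) :
    PowerSeries.rescale (q : ℂ) (qExpSeries q u * qExpSeries q v) =
      (1 - PowerSeries.C ((1 - q) * x) * PowerSeries.X +
        PowerSeries.C (1 - q : ℂ) * PowerSeries.X ^ 2) * (qExpSeries q u * qExpSeries q v) := by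
  have hC : PowerSeries.C (1 - q : ℂ) =
      PowerSeries.C ((1 - q : ℂ) * u) * PowerSeries.C ((1 - q : ℂ) * v) := by
    rw [← map_mul]
    congr 1
    linear_combination -(1 - q : ℂ) * hmul
  rw [map_mul, rescale_qExpSeries hq, rescale_qExpSeries hq, hC, ← hadd, mul_add, map_add]
  ring

lemma qInt_mul_coeff_qExpSeries_mul_qExpSeries (hq : |q| < 1) {x u v : ℂ} (hadd : u + v = x)
    (hmul : (1 - q) * (u * v) = 1) (n : ℕ) :
    (qInt q (n + 2) : ℂ) * PowerSeries.coeff (n + 2) (qExpSeries q u * qExpSeries q v) =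
      x * PowerSeries.coeff (n + 1) (qExpSeries q u * qExpSeries q v) -
        PowerSeries.coeff n (qExpSeries q u * qExpSeries q v) := by
  have h := congrArg (PowerSeries.coeff (n + 2)) (rescale_qExpSeries_mul_qExpSeries hq hadd hmul)
  rw [add_mul, sub_mul, one_mul, mul_assoc, mul_assoc, map_add, map_sub, PowerSeries.coeff_C_mul,
    PowerSeries.coeff_C_mul, PowerSeries.coeff_rescale, PowerSeries.coeff_succ_X_mul,
    PowerSeries.coeff_X_pow_mul] at h
  have hq1 : (1 - q : ℂ) ≠ 0 := mod_cast (one_sub_pos_of_abs_lt_one hq).ne'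
  have hpow : (qInt q (n + 2) : ℂ) * (1 - q) = 1 - q ^ (n + 2) :=
    mod_cast qInt_mul_one_sub q (n + 2)
  refine mul_left_cancel₀ hq1 ?_
  linear_combination
    PowerSeries.coeff (n + 2) (qExpSeries q u * qExpSeries q v) * hpow - h

lemma coeff_qExpSeries_mul_qExpSeries (hq : |q| < 1) {x : ℝ} {u v : ℂ} (hadd : u + v = x)
    (hmul : (1 - q) * (u * v) = 1) (n : ℕ) :
    PowerSeries.coeff n (qExpSeries q u * qExpSeries q v) = qHermite q n x / qFact q n := by
  induction n using Nat.twoStepInduction with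
  | zero => simp [qExpSeries, qHermite, qFact]
  | one =>
    simp [qExpSeries, qHermite, qFact, qInt, PowerSeries.coeff_mul, Nat.antidiagonal_succ,
      ← hadd, add_comm]
  | more n ih ih' =>
    have hI : (qInt q (n + 1) : ℂ) ≠ 0 := mod_cast (qInt_succ_pos hq n).ne'
    have hI' : (qInt q (n + 2) : ℂ) ≠ 0 := mod_cast (qInt_succ_pos hq (n + 1)).ne'
    have hF : (qFact q n : ℂ) ≠ 0 := mod_cast (qFact_pos hq n).ne'
    rw [← mul_right_inj' hI', qInt_mul_coeff_qExpSeries_mul_qExpSeries hq hadd hmul, ih, ih',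
      qHermite, qFact_succ q (n + 1), qFact_succ]
    push_cast
    field_simp

lemma exists_eq_two_mul_cos_div_sqrt (hq : q < 1) {x : ℝ} (hx : x ∈ Sq q) :
    ∃ θ : ℝ, x = 2 * Real.cos θ / √(1 - q) := by
  have hs : 0 < √(1 - q) := Real.sqrt_pos.2 (sub_pos.2 hq)
  have habs : |√(1 - q) * x| ≤ 2 := by
    rw [abs_mul, abs_of_pos hs, ← le_div_iff₀' hs]
    exact abs_le.2 hx
  obtain ⟨hlo, hhi⟩ := abs_le.1 habs
  refine ⟨Real.arccos (√(1 - q) * x / 2), ?_⟩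
  rw [Real.cos_arccos (by linarith) (by linarith)]
  field_simp

lemma radiusGE_coeff_qExpSeries (hq : |q| < 1) {u : ℂ} (hu : u ≠ 0) :
    RadiusGE (fun n => PowerSeries.coeff n (qExpSeries q u)) (‖u‖⁻¹ * (1 - q)⁻¹) := by
  have hpow : RadiusGE (fun n => u ^ n) ‖u‖⁻¹ := by
    refine .of_tendsto_ratio (inv_pos.2 (norm_pos_iff.2 hu)) (fun n => pow_ne_zero n hu)
      (tendsto_const_nhds.congr fun n => ?_)
    have := norm_ne_zero_iff.2 hu
    rw [inv_inv, norm_pow, norm_pow, pow_succ]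
    field_simp
  simpa only [qExpSeries, PowerSeries.coeff_mk] using
    hpow.mul (RadiusGE.ofReal_iff.2 (radiusGE_inv_qFact hq))

lemma exists_norm_eq_add_conj_eq (hq : q < 1) {x : ℝ} (hx : x ∈ Sq q) :
    ∃ u : ℂ, ‖u‖ = (√(1 - q))⁻¹ ∧ u + conj u = x := by
  obtain ⟨θ, rfl⟩ := exists_eq_two_mul_cos_div_sqrt hq hx
  refine ⟨((√(1 - q))⁻¹ : ℝ) * Complex.exp (θ * Complex.I), ?_, ?_⟩
  · rw [norm_mul, Complex.norm_exp_ofReal_mul_I, mul_one, Complex.norm_real,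
      Real.norm_of_nonneg (by positivity)]
  · rw [Complex.add_conj, Complex.re_ofReal_mul, Complex.exp_ofReal_mul_I_re]
    congr 1
    ring

lemma radiusGE_qHermite (hq : |q| < 1) {x : ℝ} (hx : x ∈ Sq q) :
    RadiusGE (fun n => qHermite q n x) √(1 - q) := by
  have hq1 := one_sub_pos_of_abs_lt_one hq
  obtain ⟨u, hu, hadd⟩ := exists_norm_eq_add_conj_eq (lt_of_abs_lt hq) hx
  have hu' : ‖conj u‖ = (√(1 - q))⁻¹ := (Complex.norm_conj u).trans hu
  have hmul : (1 - q) * (u * conj u) = 1 := by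
    rw [Complex.mul_conj, Complex.normSq_eq_norm_sq, hu, inv_pow, Real.sq_sqrt hq1.le]
    exact_mod_cast mul_inv_cancel₀ hq1.ne'
  have hu0 : u ≠ 0 := fun h => by simp [h] at hmul
  have hexp := radiusGE_coeff_qExpSeries hq hu0
  have hexp' := radiusGE_coeff_qExpSeries hq ((map_ne_zero conj).2 hu0)
  rw [hu, inv_inv] at hexp
  rw [hu', inv_inv] at hexp'
  have hprod := (hexp.coeff_mul hexp').mul (RadiusGE.ofReal_iff.2 (radiusGE_qFact hq))
  rw [inv_mul_cancel_right₀ hq1.ne'] at hprod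
  have hcoeff (n : ℕ) : PowerSeries.coeff n (qExpSeries q u * qExpSeries q (conj u)) *
      (qFact q n : ℂ) = qHermite q n x := by
    rw [coeff_qExpSeries_mul_qExpSeries hq hadd hmul,
      div_mul_cancel₀ _ (mod_cast (qFact_pos hq n).ne')]
  simp only [hcoeff] at hprod
  exact RadiusGE.ofReal_iff.1 hprod

end GeneratingFunction

/-! ### The Poisson–Mehler kernel -/

section Kernel

variable {q x y t : ℝ}

/-- The shifted Poisson–Mehler kernel `γ_{k,l}(t) = ∑ₙ H_{n+k}(x|q) H_{n+l}(y|q) tⁿ / [n]_q!`;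
the Poisson–Mehler kernel itself is `γ_{0,0}`. -/
def mehlerKernel (q x y : ℝ) (k l : ℕ) (t : ℝ) : ℝ :=
  ∑' n, qHermite q (n + k) x * qHermite q (n + l) y / qFact q n * t ^ n

lemma mehlerKernel_comm (q x y : ℝ) (k l : ℕ) (t : ℝ) :
    mehlerKernel q x y k l t = mehlerKernel q y x l k t := by
  simp only [mehlerKernel, mul_comm (qHermite q (_ + k) x)]

lemma radiusGE_mehlerKernel (hq : |q| < 1) (hx : x ∈ Sq q) (hy : y ∈ Sq q) (k l : ℕ) :
    RadiusGE (fun n => qHermite q (n + k) x * qHermite q (n + l) y / qFact q n) 1 := by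
  have hq1 := one_sub_pos_of_abs_lt_one hq
  have hs : √(1 - q) ≠ 0 := (Real.sqrt_pos.2 hq1).ne'
  have h := (((radiusGE_qHermite hq hx).nat_add hs k).mul
    ((radiusGE_qHermite hq hy).nat_add hs l)).mul (radiusGE_inv_qFact hq)
  rwa [Real.mul_self_sqrt hq1.le, mul_inv_cancel₀ hq1.ne'] at h

lemma hasSum_mehlerKernel (hq : |q| < 1) (hx : x ∈ Sq q) (hy : y ∈ Sq q) (ht : |t| < 1)
    (k l : ℕ) :
    HasSum (fun n => qHermite q (n + k) x * qHermite q (n + l) y / qFact q n * t ^ n)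
      (mehlerKernel q x y k l t) := by
  refine (Summable.of_norm ?_).hasSum
  simpa only [norm_mul, norm_pow, Real.norm_eq_abs] using
    (radiusGE_mehlerKernel hq hx hy k l).summable_norm_mul_pow (abs_nonneg t) ht

lemma tendsto_mehlerKernel_nhds_zero (hq : |q| < 1) (hx : x ∈ Sq q) (hy : y ∈ Sq q) :
    Tendsto (mehlerKernel q x y 0 0) (𝓝 0) (𝓝 1) := by
  have h0 : qHermite q 0 x * qHermite q 0 y / qFact q 0 = 1 := by simp [qHermite, qFact]
  rw [← h0]
  exact (radiusGE_mehlerKernel hq hx hy 0 0).tendsto_tsum_nhds_zero one_pos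

lemma hasSum_qInt_mul {f : ℕ → ℝ} {S : ℝ} (hq : |q| < 1)
    (hf : HasSum (fun n => f (n + 1) / qFact q n * t ^ n) S) :
    HasSum (fun n => qInt q n * f n / qFact q n * t ^ n) (t * S) := by
  rw [← hasSum_nat_add_iff' 1]
  simp only [sum_range_one, qInt, range_zero, sum_empty, zero_mul, zero_div, sub_zero]
  refine (hf.mul_left t).congr_fun fun n => ?_
  have hI := (qInt_succ_pos hq n).ne'
  have hF := (qFact_pos hq n).ne'
  rw [qFact_succ, ← qInt, pow_succ]
  field_simp

lemma abs_mul_pow_lt_one (hq : |q| < 1) (ht : |t| < 1) (n : ℕ) : |t * q ^ n| < 1 := by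
  rw [abs_mul, abs_pow]
  exact mul_lt_one_of_nonneg_of_lt_one_left (abs_nonneg t) ht (pow_le_one₀ (abs_nonneg q) hq.le)

-- For `n = 0` the truncated index `n - 1` is harmless, since `[0]_q = 0`.
lemma qHermite_succ (q x : ℝ) (n : ℕ) :
    qHermite q (n + 1) x = x * qHermite q n x - qInt q n * qHermite q (n - 1) x := by
  cases n <;> simp [qHermite, qInt]

lemma mehlerKernel_one_left (hq : |q| < 1) (hx : x ∈ Sq q) (hy : y ∈ Sq q) (ht : |t| < 1)
    (l : ℕ) :
    mehlerKernel q x y 1 l t =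
      x * mehlerKernel q x y 0 l t - t * mehlerKernel q x y 0 (l + 1) t := by
  have hlow := hasSum_qInt_mul hq (f := fun n => qHermite q (n - 1) x * qHermite q (n + l) y)
    (by simpa only [Nat.add_sub_cancel, add_zero, add_assoc, add_comm 1 l] using
      hasSum_mehlerKernel hq hx hy ht 0 (l + 1))
  refine (hasSum_mehlerKernel hq hx hy ht 1 l).unique
    ((((hasSum_mehlerKernel hq hx hy ht 0 l).mul_left x).sub hlow).congr_fun fun n => ?_)
  rw [qHermite_succ, add_zero]
  ring

lemma mehlerKernel_sub_mehlerKernel_mul (hq : |q| < 1) (hx : x ∈ Sq q) (hy : y ∈ Sq q)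
    (ht : |t| < 1) :
    mehlerKernel q x y 0 0 t - mehlerKernel q x y 0 0 (t * q) =
      (1 - q) * t * mehlerKernel q x y 1 1 t := by
  have htq : |t * q| < 1 := by simpa using abs_mul_pow_lt_one hq ht 1
  have hlow := hasSum_qInt_mul hq (f := fun n => qHermite q n x * qHermite q n y)
    (hasSum_mehlerKernel hq hx hy ht 1 1)
  rw [mul_assoc]
  refine ((hasSum_mehlerKernel hq hx hy ht 0 0).sub
    (hasSum_mehlerKernel hq hx hy htq 0 0)).unique ((hlow.mul_left (1 - q)).congr_fun fun n => ?_)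
  rw [mul_pow, add_zero]
  linear_combination
    (-(qHermite q n x * qHermite q n y / qFact q n * t ^ n)) * qInt_mul_one_sub q n

lemma one_sub_mul_mehlerKernel_zero_two (hq : |q| < 1) (hx : x ∈ Sq q) (hy : y ∈ Sq q)
    (ht : |t| < 1) :
    (1 - q) * mehlerKernel q x y 0 2 t = (1 - q) * y * mehlerKernel q x y 0 1 t -
      (mehlerKernel q x y 0 0 t - q * mehlerKernel q x y 0 0 (t * q)) := by
  have htq : |t * q| < 1 := by simpa using abs_mul_pow_lt_one hq ht 1
  have h := ((hasSum_mehlerKernel hq hx hy ht 0 1).mul_left ((1 - q) * y)).sub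
    ((hasSum_mehlerKernel hq hx hy ht 0 0).sub
      ((hasSum_mehlerKernel hq hx hy htq 0 0).mul_left q))
  refine ((hasSum_mehlerKernel hq hx hy ht 0 2).mul_left (1 - q)).unique
    (h.congr_fun fun n => ?_)
  rw [qHermite, mul_pow, add_zero]
  linear_combination
    (-(qHermite q n x * qHermite q n y / qFact q n * t ^ n)) * qInt_mul_one_sub q (n + 1)

lemma Wk_mul_mehlerKernel (hq : |q| < 1) (hx : x ∈ Sq q) (hy : y ∈ Sq q) (ht : |t| < 1) :
    Wk q x y t 0 * mehlerKernel q x y 0 0 t =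
      (1 - t ^ 2) * (1 - t ^ 2 * q) * mehlerKernel q x y 0 0 (t * q) := by
  have h10 := mehlerKernel_one_left hq hx hy ht 0
  have h01 := mehlerKernel_one_left hq hy hx ht 0
  rw [mehlerKernel_comm q y x 1 0, mehlerKernel_comm q y x 0 0, mehlerKernel_comm q y x 0 1] at h01
  have h11 := mehlerKernel_one_left hq hx hy ht 1
  have h02 := one_sub_mul_mehlerKernel_zero_two hq hx hy ht
  have hdiff := mehlerKernel_sub_mehlerKernel_mul hq hx hy ht
  have h01' : (1 - t ^ 2) * mehlerKernel q x y 0 1 t = (y - t * x) * mehlerKernel q x y 0 0 t := by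
    linear_combination h01 - t * h10
  simp only [Wk, mul_zero, pow_zero, mul_one]
  linear_combination (1 - t ^ 2) * hdiff + (1 - t ^ 2) * (1 - q) * t * h11
    - (1 - t ^ 2) * t ^ 2 * h02 + (1 - q) * t * (x - t * y) * h01'

end Kernel

/-! ### Infinite products -/

section InfiniteProduct

variable {q x y t : ℝ}

lemma summable_norm_sub_one_comp_mul_pow {𝕜 E : Type*} [NontriviallyNormedField 𝕜]
    [NormedRing E] [NormedSpace 𝕜 E] {g : 𝕜 → E} (hg : DifferentiableAt 𝕜 g 0) (hg0 : g 0 = 1)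
    {r : 𝕜} (hr : ‖r‖ < 1) (a : 𝕜) : Summable fun k : ℕ => ‖g (a * r ^ k) - 1‖ := by
  have hO : (fun z => g z - 1) =O[𝓝 0] (id : 𝕜 → 𝕜) := by
    simpa [hg0, Function.id_def] using hg.isBigO_sub
  have hgeom : Summable fun k : ℕ => ‖a * r ^ k‖ := by
    simpa only [norm_mul, norm_pow] using
      (summable_geometric_of_lt_one (norm_nonneg r) hr).mul_left ‖a‖
  exact hO.comp_summable_norm hgeom

lemma multipliable_comp_mul_pow {𝕜 E : Type*} [NontriviallyNormedField 𝕜] [NormedCommRing E]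
    [NormOneClass E] [CompleteSpace E] [NormedSpace 𝕜 E] {g : 𝕜 → E}
    (hg : DifferentiableAt 𝕜 g 0) (hg0 : g 0 = 1) {r : 𝕜} (hr : ‖r‖ < 1) (a : 𝕜) :
    Multipliable fun k : ℕ => g (a * r ^ k) := by
  simpa using multipliable_one_add_of_summable (summable_norm_sub_one_comp_mul_pow hg hg0 hr a)

lemma qPoch_succ (a q : ℝ) (n : ℕ) : qPoch a q (n + 1) = qPoch a q n * (1 - a * q ^ n) :=
  prod_range_succ _ n

lemma tendsto_qPoch (hq : |q| < 1) (a : ℝ) : Tendsto (qPoch a q) atTop (𝓝 (qPochInf a q)) :=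
  (multipliable_comp_mul_pow (g := fun z => 1 - z) (by fun_prop) (sub_zero 1) hq
    a).tendsto_prod_tprod_nat

lemma Wk_eq_Wk_mul_pow_zero (q x y t : ℝ) (k : ℕ) : Wk q x y t k = Wk q x y (t * q ^ k) 0 := by
  simp only [Wk]
  ring

lemma one_sub_two_mul_add_sq_pos {c : ℝ} (ht : |t| < 1) (hc : |c| ≤ 1) :
    0 < 1 - 2 * t * c + t ^ 2 := by
  have htc : 0 < 1 - t * c := by
    refine sub_pos.2 (lt_of_abs_lt ?_)
    rw [abs_mul]
    exact mul_lt_one_of_nonneg_of_lt_one_left (abs_nonneg t) ht hc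
  have hc2 : 0 ≤ 1 - c ^ 2 := sub_nonneg.2 ((sq_le_one_iff_abs_le_one c).2 hc)
  calc 0 < (1 - t * c) ^ 2 + t ^ 2 * (1 - c ^ 2) := by positivity
    _ = _ := by ring

lemma Wk_pos (hq : |q| < 1) (hx : x ∈ Sq q) (hy : y ∈ Sq q) (ht : |t| < 1) (k : ℕ) :
    0 < Wk q x y t k := by
  have hq1 := one_sub_pos_of_abs_lt_one hq
  obtain ⟨θ, rfl⟩ := exists_eq_two_mul_cos_div_sqrt (lt_of_abs_lt hq) hx
  obtain ⟨φ, rfl⟩ := exists_eq_two_mul_cos_div_sqrt (lt_of_abs_lt hq) hy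
  have htk := abs_mul_pow_lt_one hq ht k
  rw [Wk_eq_Wk_mul_pow_zero]
  generalize t * q ^ k = r at htk
  have hfactor : Wk q (2 * Real.cos θ / √(1 - q)) (2 * Real.cos φ / √(1 - q)) r 0 =
      (1 - 2 * r * Real.cos (θ + φ) + r ^ 2) * (1 - 2 * r * Real.cos (θ - φ) + r ^ 2) := by
    rw [Real.cos_add, Real.cos_sub, Wk]
    field_simp
    rw [Real.sq_sqrt hq1.le]
    linear_combination
      4 * (1 - q) * r ^ 2 * Real.sin φ ^ 2 * Real.sin_sq_add_cos_sq θ +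
        4 * (1 - q) * r ^ 2 * (1 - Real.cos θ ^ 2) * Real.sin_sq_add_cos_sq φ
  rw [hfactor]
  exact mul_pos (one_sub_two_mul_add_sq_pos htk (Real.abs_cos_le_one _))
    (one_sub_two_mul_add_sq_pos htk (Real.abs_cos_le_one _))

lemma summable_norm_Wk_sub_one (hq : |q| < 1) (x y t : ℝ) :
    Summable fun k => ‖Wk q x y t k - 1‖ := by
  simp only [Wk_eq_Wk_mul_pow_zero q x y t]
  exact summable_norm_sub_one_comp_mul_pow (g := fun z => Wk q x y z 0)
    (by unfold Wk; fun_prop) (by simp [Wk]) hq t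

lemma tendsto_prod_Wk (hq : |q| < 1) (x y t : ℝ) :
    Tendsto (fun n => ∏ k ∈ range n, Wk q x y t k) atTop (𝓝 (∏' k, Wk q x y t k)) := by
  simpa using
    (multipliable_one_add_of_summable (summable_norm_Wk_sub_one hq x y t)).tendsto_prod_tprod_nat

lemma tprod_Wk_ne_zero (hq : |q| < 1) (hx : x ∈ Sq q) (hy : y ∈ Sq q) (ht : |t| < 1) :
    ∏' k, Wk q x y t k ≠ 0 := by
  simpa using tprod_one_add_ne_zero_of_summable (f := fun k => Wk q x y t k - 1)
    (fun k => by simpa using (Wk_pos hq hx hy ht k).ne') (summable_norm_Wk_sub_one hq x y t)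

lemma mehlerKernel_mul_prod_Wk (hq : |q| < 1) (hx : x ∈ Sq q) (hy : y ∈ Sq q) (ht : |t| < 1)
    (n : ℕ) :
    mehlerKernel q x y 0 0 t * ∏ k ∈ range n, Wk q x y t k =
      qPoch (t ^ 2) q (2 * n) * mehlerKernel q x y 0 0 (t * q ^ n) := by
  induction n with
  | zero => simp [qPoch]
  | succ n ih =>
    have h := Wk_mul_mehlerKernel hq hx hy (abs_mul_pow_lt_one hq ht n)
    rw [prod_range_succ, ← mul_assoc, ih, mul_assoc, mul_comm (mehlerKernel _ _ _ _ _ _),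
      Wk_eq_Wk_mul_pow_zero, h, Nat.mul_succ, qPoch_succ, qPoch_succ]
    ring_nf

lemma mehlerKernel_eq_qPochInf_div_tprod (hq : |q| < 1) (hx : x ∈ Sq q) (hy : y ∈ Sq q)
    (ht : |t| < 1) :
    mehlerKernel q x y 0 0 t = qPochInf (t ^ 2) q / ∏' k, Wk q x y t k := by
  rw [eq_div_iff (tprod_Wk_ne_zero hq hx hy ht)]
  have hpow : Tendsto (fun n : ℕ => t * q ^ n) atTop (𝓝 0) := by
    simpa using (tendsto_pow_atTop_nhds_zero_of_abs_lt_one hq).const_mul t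
  have hpoch := (tendsto_qPoch hq (t ^ 2)).comp (tendsto_id.const_mul_atTop' two_pos)
  have hrhs := hpoch.mul ((tendsto_mehlerKernel_nhds_zero hq hx hy).comp hpow)
  have hlhs := (tendsto_prod_Wk hq x y t).const_mul (mehlerKernel q x y 0 0 t)
  simp only [mehlerKernel_mul_prod_Wk hq hx hy ht] at hlhs
  simpa using tendsto_nhds_unique hlhs hrhs

end InfiniteProduct

/-- Poisson–Mehler formula. -/
theorem poisson_mehler (q ρ x y : ℝ) (hq : |q| < 1) (hρ : |ρ| < 1)
    (hx : x ∈ Sq q) (hy : y ∈ Sq q) :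
    HasSum (fun n : ℕ => ρ ^ n / qFact q n * qHermite q n x * qHermite q n y)
      (qPochInf (ρ ^ 2) q / ∏' k : ℕ, Wk q x y ρ k) := by
  rw [← mehlerKernel_eq_qPochInf_div_tprod hq hx hy hρ]
  refine (hasSum_mehlerKernel hq hx hy hρ 0 0).congr_fun fun n => ?_
  rw [add_zero]
  ring
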